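/- In the two-class sparse-perturbation model, assume l(d) → ∞ and p(d)·l(d) → 0 as d → ∞. Then the c-segmentation rule with c = d/l classifies correctly with probability tending to one: P(w is misclassified under the rule with c = d/l) → 0 as d → ∞ (and l → ∞). -/

import Mathlib

/-!
Two-class sparse-perturbation model.  `m₁ = 0 ∈ ℝ^d`, `m₂` has a `1` at every
position `i ≡ 1 (mod l)` (0-indexed: `i % l = 0`) and `0` elsewhere; the noise
vectors `Y, Ỹ, Ȳ` are independent with i.i.d. coordinates equal to `N` with
probability `p` and `0` with probability `1-p`.  The dictionary words are
`w¹ = m₁ + Y ∈ C₁`, `w² = m₂ + Ỹ ∈ C₂`, and the test word is `w = m₁ + Ȳ`,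
distributed as a word of class `C₁`.  The `c`-segmentation rule is the
block-majority-vote rule with fair tie-breaking.
-/

open MeasureTheory Filter
open scoped ENNReal

noncomputable section

/-- Law of a noise coordinate: `N` with probability `p`, `0` with probability `1-p`. -/
def noiseLaw (p N : ℝ) : Measure ℝ :=
  ENNReal.ofReal p • Measure.dirac N + ENNReal.ofReal (1 - p) • Measure.dirac 0

/-- A fair coin on `Bool`. -/
def coinLaw : Measure Bool :=
  (1 / 2 : ℝ≥0∞) • Measure.dirac true + (1 / 2 : ℝ≥0∞) • Measure.dirac false

/-- Sample space of the sparse-perturbation model with `c` segments: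
`(Y, Ỹ, Ȳ, per-block coins, final coin)`. -/
abbrev SparseSpace (d c : ℕ) : Type :=
  (Fin d → ℝ) × (Fin d → ℝ) × (Fin d → ℝ) × (Fin c → Bool) × Bool

/-- Joint law of the sparse-perturbation model: `Y, Ỹ, Ȳ` independent with
i.i.d. `noiseLaw p N` coordinates, and independent fair tie-breaking coins. -/
def sparseModel (p N : ℝ) (d c : ℕ) : Measure (SparseSpace d c) :=
  (Measure.pi fun _ : Fin d => noiseLaw p N).prod <|
    (Measure.pi fun _ : Fin d => noiseLaw p N).prod <|
      (Measure.pi fun _ : Fin d => noiseLaw p N).prod <|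
        (Measure.pi fun _ : Fin c => coinLaw).prod coinLaw

/-- The base vector `m₂` of class `C₂`: `1` at every position `i ≡ 1 (mod l)`
(0-indexed: `i % l = 0`), `0` elsewhere. -/
def base2 (d l : ℕ) : Fin d → ℝ := fun i => if i.val % l = 0 then 1 else 0

/-- The `c`-segmentation rule assigns the test word `w` to class `C₂`, given the
dictionary words `w1 ∈ C₁` and `w2 ∈ C₂`.  The coordinates are split into `c`
consecutive blocks of length `d / c`; block `j` votes for class 2 if `w` is
strictly closer (in Euclidean distance, equivalently squared Euclidean
distance) to `w2` than to `w1` on that block, for class 1 if strictly closer to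
`w1`, and according to the fair coin `coins j` in case of a tie; `w` is
assigned class `C₂` if a strict majority of blocks votes for class 2, or if
exactly half do and the final fair coin `fc` comes up heads. -/
def classifiedC2 {d c : ℕ} (w w1 w2 : Fin d → ℝ) (coins : Fin c → Bool) (fc : Bool) : Prop :=
  let dist2 : (Fin d → ℝ) → Fin c → ℝ := fun v j =>
    ∑ i : Fin d, if i.val / (d / c) = j.val then (w i - v i) ^ 2 else 0
  let vote2 : Fin c → Prop := fun j =>
    dist2 w2 j < dist2 w1 j ∨ (dist2 w1 j = dist2 w2 j ∧ coins j = true)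
  let V : ℕ := {j : Fin c | vote2 j}.ncard
  c < 2 * V ∨ (2 * V = c ∧ fc = true)

/-- The event that the test word `w = m₁ + Ȳ = Ȳ` is assigned class `C₂` by the
`c`-segmentation rule, with dictionary words `w¹ = Y` and `w² = m₂ + Ỹ`. -/
def sparseAssignedC2 (d c l : ℕ) : Set (SparseSpace d c) :=
  {ω | classifiedC2 ω.2.2.1 ω.1 (fun i => base2 d l i + ω.2.1 i) ω.2.2.2.1 ω.2.2.2.2}

/-!
A block on which all three noise vectors vanish votes for class 1: there `w = w¹`, while `w` and
`w²` differ at a coordinate of the block where `m₂` has a `1`. A misclassification needs at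
least `c / 2` votes for class 2, hence at least `c / 2` coordinates hit by noise. At most `3 p d`
such coordinates are expected, so by Markov's inequality a misclassification has probability at
most `6 p d / c`, which is `6 p l` when `c = d / l`.
-/

theorem mul_measure_le_card_le_sum_measure {Ω ι : Type*} [MeasurableSpace Ω] [Fintype ι]
    (μ : Measure Ω) {S : Ω → Finset ι} (hS : ∀ i, MeasurableSet {ω | i ∈ S ω}) (a : ℝ≥0∞) :
    a * μ {ω | a ≤ (S ω).card} ≤ ∑ i, μ {ω | i ∈ S ω} := by
  classical
  have card_eq (ω : Ω) : ((S ω).card : ℝ≥0∞) = ∑ i, {ω | i ∈ S ω}.indicator 1 ω := by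
    simp [Set.indicator_apply]
  have meas_indicator (i : ι) : Measurable ({ω | i ∈ S ω}.indicator (1 : Ω → ℝ≥0∞)) :=
    measurable_one.indicator (hS i)
  calc a * μ {ω | a ≤ (S ω).card}
      = a * μ {ω | a ≤ ∑ i, {ω | i ∈ S ω}.indicator 1 ω} := by simp only [card_eq]
    _ ≤ ∫⁻ ω, ∑ i, {ω | i ∈ S ω}.indicator 1 ω ∂μ :=
        mul_meas_ge_le_lintegral (Finset.measurable_fun_sum _ fun i _ => meas_indicator i) a
    _ = ∑ i, μ {ω | i ∈ S ω} := by
        rw [lintegral_finsetSum _ fun i _ => meas_indicator i]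
        simp only [lintegral_indicator_one (hS _)]

section SegmentationRule

variable {d c : ℕ}

/-- The squared Euclidean distance between `w` and `v` on the `j`-th of the `c` blocks, written as
in `classifiedC2`. -/
def blockSqDist (w v : Fin d → ℝ) (j : Fin c) : ℝ :=
  ∑ i : Fin d, if i.val / (d / c) = j.val then (w i - v i) ^ 2 else 0

/-- Block `j` votes for class 2 in the rule `classifiedC2`, ties being broken by `coins j`. -/
def VotesC2 (w w1 w2 : Fin d → ℝ) (coins : Fin c → Bool) (j : Fin c) : Prop :=
  blockSqDist w w2 j < blockSqDist w w1 j ∨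
    (blockSqDist w w1 j = blockSqDist w w2 j ∧ coins j = true)

variable {w w1 w2 v : Fin d → ℝ} {coins : Fin c → Bool} {fc : Bool} {j : Fin c}

theorem classifiedC2.le_two_mul_ncard_votesC2 (h : classifiedC2 w w1 w2 coins fc) :
    c ≤ 2 * {j | VotesC2 w w1 w2 coins j}.ncard :=
  h.elim le_of_lt fun h => h.1.ge

theorem blockSqDist_eq_zero (h : ∀ i : Fin d, i.val / (d / c) = j.val → w i = v i) :
    blockSqDist w v j = 0 :=
  Finset.sum_eq_zero fun i _ => by
    split_ifs with hi
    · rw [h i hi, sub_self, zero_pow two_ne_zero]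
    · rfl

theorem blockSqDist_pos (h : ∃ i : Fin d, i.val / (d / c) = j.val ∧ w i ≠ v i) :
    0 < blockSqDist w v j := by
  obtain ⟨i, hi, hne⟩ := h
  refine Finset.sum_pos' (fun k _ => by split_ifs <;> positivity) ⟨i, Finset.mem_univ i, ?_⟩
  rw [if_pos hi]
  exact sq_pos_of_ne_zero (sub_ne_zero.mpr hne)

theorem not_votesC2 (h1 : ∀ i : Fin d, i.val / (d / c) = j.val → w i = w1 i)
    (h2 : ∃ i : Fin d, i.val / (d / c) = j.val ∧ w i ≠ w2 i) : ¬VotesC2 w w1 w2 coins j := by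
  have lt : blockSqDist w w1 j < blockSqDist w w2 j :=
    (blockSqDist_eq_zero h1).trans_lt (blockSqDist_pos h2)
  rintro (gt | ⟨eq, -⟩)
  · exact lt.asymm gt
  · exact lt.ne eq

theorem ncard_le_card_of_block_inter_nonempty {B : Set (Fin c)} {S : Finset (Fin d)}
    (h : ∀ j ∈ B, ∃ i ∈ S, i.val / (d / c) = j.val) : B.ncard ≤ S.card := by
  have image_subset : Fin.val '' B ⊆ (fun i : Fin d => i.val / (d / c)) '' (S : Set (Fin d)) := by
    rintro _ ⟨j, hj, rfl⟩
    exact h j hj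
  calc B.ncard = (Fin.val '' B).ncard := (Set.ncard_image_of_injective B Fin.val_injective).symm
    _ ≤ ((fun i : Fin d => i.val / (d / c)) '' (S : Set (Fin d))).ncard :=
        Set.ncard_le_ncard image_subset
    _ ≤ (S : Set (Fin d)).ncard := Set.ncard_image_le
    _ = S.card := Set.ncard_coe_finset S

end SegmentationRule

section SparseModel

variable {d c l : ℕ} {p N : ℝ}

/-- The coordinates at which at least one of the noise vectors `Y`, `Ỹ`, `Ȳ` is nonzero. -/
def noisyCoords (ω : SparseSpace d c) : Finset (Fin d) :=
  {i | ω.1 i ≠ 0 ∨ ω.2.1 i ≠ 0 ∨ ω.2.2.1 i ≠ 0}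

theorem mem_noisyCoords {ω : SparseSpace d c} {i : Fin d} :
    i ∈ noisyCoords ω ↔ ω.1 i ≠ 0 ∨ ω.2.1 i ≠ 0 ∨ ω.2.2.1 i ≠ 0 :=
  Finset.mem_filter_univ i

theorem exists_block_base2_eq_one (hcd : c ≤ d) (hl : l ∣ d / c) (j : Fin c) :
    ∃ i : Fin d, i.val / (d / c) = j.val ∧ base2 d l i = 1 := by
  have length_pos : 0 < d / c := Nat.div_pos hcd j.pos
  have start_lt : d / c * j < d :=
    (Nat.mul_lt_mul_of_pos_left j.isLt length_pos).trans_le (Nat.div_mul_le_self d c)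
  exact ⟨⟨d / c * j, start_lt⟩, Nat.mul_div_cancel_left j length_pos,
    if_pos (Nat.mod_eq_zero_of_dvd (hl.mul_right j))⟩

theorem le_two_mul_card_noisyCoords (hcd : c ≤ d) (hl : l ∣ d / c) {ω : SparseSpace d c}
    (hω : ω ∈ sparseAssignedC2 d c l) : c ≤ 2 * (noisyCoords ω).card := by
  refine (classifiedC2.le_two_mul_ncard_votesC2 hω).trans (Nat.mul_le_mul_left 2 ?_)
  refine ncard_le_card_of_block_inter_nonempty fun j vote => ?_
  by_contra! clean
  have noise_eq_zero (i : Fin d) (hi : i.val / (d / c) = j.val) :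
      ω.1 i = 0 ∧ ω.2.1 i = 0 ∧ ω.2.2.1 i = 0 := by
    have not_noisy : i ∉ noisyCoords ω := fun noisy => clean i noisy hi
    simpa only [mem_noisyCoords, not_or, not_not] using not_noisy
  obtain ⟨i, hi, base_eq_one⟩ := exists_block_base2_eq_one hcd hl j
  refine not_votesC2 (fun k hk => ?_) ⟨i, hi, ?_⟩ vote
  · rw [(noise_eq_zero k hk).1, (noise_eq_zero k hk).2.2]
  · rw [(noise_eq_zero i hi).2.1, (noise_eq_zero i hi).2.2, base_eq_one, add_zero]
    exact zero_ne_one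

theorem isProbabilityMeasure_noiseLaw (hp : p ∈ Set.Icc (0 : ℝ) 1) :
    IsProbabilityMeasure (noiseLaw p N) := by
  constructor
  simp [noiseLaw, ← ENNReal.ofReal_add hp.1 (sub_nonneg.mpr hp.2)]

instance isProbabilityMeasure_coinLaw : IsProbabilityMeasure coinLaw := by
  constructor
  simp [coinLaw, ENNReal.inv_two_add_inv_two]

theorem noiseLaw_ne_zero_le (p N : ℝ) : noiseLaw p N {x | x ≠ 0} ≤ ENNReal.ofReal p := by
  simpa [noiseLaw] using mul_le_of_le_one_right' (prob_le_one (μ := Measure.dirac N))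

theorem measurableSet_mem_noisyCoords (i : Fin d) :
    MeasurableSet {ω : SparseSpace d c | i ∈ noisyCoords ω} := by
  simp only [mem_noisyCoords]
  measurability

theorem sparseModel_mem_noisyCoords_le (hp : p ∈ Set.Icc (0 : ℝ) 1) (i : Fin d) :
    sparseModel p N d c {ω | i ∈ noisyCoords ω} ≤ 3 * ENNReal.ofReal p := by
  have := isProbabilityMeasure_noiseLaw (N := N) hp
  let μ := sparseModel p N d c
  have measure_ne_zero_le {X : SparseSpace d c → Fin d → ℝ}
      (hX : MeasurePreserving X μ (Measure.pi fun _ => noiseLaw p N)) :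
      μ {ω | X ω i ≠ 0} ≤ ENNReal.ofReal p := by
    have coord := (measurePreserving_eval (fun _ : Fin d => noiseLaw p N) i).comp hX
    have meas : MeasurableSet {x : ℝ | x ≠ 0} := (measurableSet_singleton 0).compl
    exact (coord.measure_preimage meas.nullMeasurableSet).trans_le (noiseLaw_ne_zero_le p N)
  calc μ {ω | i ∈ noisyCoords ω}
      = μ ({ω | ω.1 i ≠ 0} ∪ ({ω | ω.2.1 i ≠ 0} ∪ {ω | ω.2.2.1 i ≠ 0})) := by
        simp only [mem_noisyCoords, Set.ofPred_or]
    _ ≤ μ {ω | ω.1 i ≠ 0} + (μ {ω | ω.2.1 i ≠ 0} + μ {ω | ω.2.2.1 i ≠ 0}) :=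
        (measure_union_le _ _).trans (by gcongr; exact measure_union_le _ _)
    _ ≤ ENNReal.ofReal p + (ENNReal.ofReal p + ENNReal.ofReal p) := by
        gcongr
        · exact measure_ne_zero_le measurePreserving_fst
        · exact measure_ne_zero_le (measurePreserving_fst.comp measurePreserving_snd)
        · exact measure_ne_zero_le
            (measurePreserving_fst.comp (measurePreserving_snd.comp measurePreserving_snd))
    _ = 3 * ENNReal.ofReal p := by ring

theorem half_mul_sparseModel_assignedC2_le (hp : p ∈ Set.Icc (0 : ℝ) 1) (hcd : c ≤ d)
    (hl : l ∣ d / c) :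
    (c / 2 : ℝ≥0∞) * sparseModel p N d c (sparseAssignedC2 d c l) ≤
      d * (3 * ENNReal.ofReal p) := by
  have assigned_subset : sparseAssignedC2 d c l ⊆
      {ω | (c / 2 : ℝ≥0∞) ≤ (noisyCoords ω).card} := fun ω hω =>
    ENNReal.div_le_of_le_mul' (mod_cast le_two_mul_card_noisyCoords hcd hl hω)
  calc (c / 2 : ℝ≥0∞) * sparseModel p N d c (sparseAssignedC2 d c l)
      ≤ c / 2 * sparseModel p N d c {ω | (c / 2 : ℝ≥0∞) ≤ (noisyCoords ω).card} := by gcongr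
    _ ≤ ∑ i, sparseModel p N d c {ω | i ∈ noisyCoords ω} :=
        mul_measure_le_card_le_sum_measure _ measurableSet_mem_noisyCoords _
    _ ≤ ∑ _i : Fin d, 3 * ENNReal.ofReal p :=
        Finset.sum_le_sum fun i _ => sparseModel_mem_noisyCoords_le hp i
    _ = d * (3 * ENNReal.ofReal p) := by simp

theorem sparseModel_real_assignedC2_le (hp : p ∈ Set.Icc (0 : ℝ) 1) (hc : 0 < c) (hcd : c ≤ d)
    (hl : l ∣ d / c) :
    (sparseModel p N d c).real (sparseAssignedC2 d c l) ≤ 6 * (p * (d / c)) := by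
  have bound := ENNReal.toReal_mono (by finiteness)
    (half_mul_sparseModel_assignedC2_le (N := N) hp hcd hl)
  simp only [ENNReal.toReal_mul, ENNReal.toReal_div, ENNReal.toReal_natCast, ENNReal.toReal_ofNat,
    ENNReal.toReal_ofReal hp.1, ← measureReal_def] at bound
  have hc' : (0 : ℝ) < c := Nat.cast_pos.mpr hc
  rw [← mul_div_assoc, ← mul_div_assoc, le_div_iff₀ hc']
  linarith

end SparseModel

theorem segmentation_rule_succeeds_general (l : ℕ → ℕ) (N p : ℕ → ℝ) (hld : ∀ d, l d ∣ d)
    (hp : ∀ d, p d ∈ Set.Icc (0 : ℝ) 1)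
    (hpl : Tendsto (fun d : ℕ => p d * (l d : ℝ)) atTop (nhds 0)) :
    Tendsto (fun d : ℕ =>
        ((sparseModel (p d) (N d) d (d / l d)) (sparseAssignedC2 d (d / l d) (l d))).toReal)
      atTop (nhds 0) := by
  have bound_tendsto : Tendsto (fun d => 6 * (p d * (l d : ℝ))) atTop (nhds 0) := by
    simpa only [mul_zero] using hpl.const_mul 6
  refine squeeze_zero' (.of_forall fun _ => ENNReal.toReal_nonneg) ?_ bound_tendsto
  filter_upwards [eventually_gt_atTop 0] with d hd
  have blocks_pos : 0 < d / l d :=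
    Nat.div_pos (Nat.le_of_dvd hd (hld d)) (Nat.pos_of_dvd_of_pos (hld d) hd)
  have block_length : d / (d / l d) = l d := Nat.div_div_self (hld d) hd.ne'
  have block_length_real : (d : ℝ) / (d / l d : ℕ) = l d := by
    rw [← Nat.cast_div (Nat.div_dvd_of_dvd (hld d)) (Nat.cast_ne_zero.mpr blocks_pos.ne'),
      block_length]
  simpa only [block_length_real, measureReal_def] using
    sparseModel_real_assignedC2_le (N := N d) (hp d) blocks_pos (Nat.div_le_self d (l d))
      block_length.symm.dvd

/-- in the two-class sparse-perturbation model, if `l(d) → ∞` and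
`p(d)·l(d) → 0`, then the `c`-segmentation rule with `c = d/l` classifies
correctly with probability tending to one:
`P(w misclassified with c = d/l) → 0` as `d → ∞`. -/
theorem segmentation_rule_succeeds (l : ℕ → ℕ) (N p : ℕ → ℝ)
    (hl0 : ∀ d, 0 < l d) (hld : ∀ d, l d ∣ d)
    (hN : ∀ d, 0 < N d) (hp : ∀ d, p d ∈ Set.Ioo (0 : ℝ) 1)
    (hl : Tendsto (fun d : ℕ => (l d : ℝ)) atTop atTop)
    (hpl : Tendsto (fun d : ℕ => p d * (l d : ℝ)) atTop (nhds 0)) :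
    Tendsto (fun d : ℕ =>
        ((sparseModel (p d) (N d) d (d / l d)) (sparseAssignedC2 d (d / l d) (l d))).toReal)
      atTop (nhds 0) := by
  exact segmentation_rule_succeeds_general l N p hld (fun d => Set.Ioo_subset_Icc_self (hp d)) hpl

end
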